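/- Let d ≥ 2, 1 ≤ n < d, and let a_1, …, a_d ≥ 0. Let ψ = Σ_i a_i |ii⟩. Then the matrix Σ_i a_i² |ii⟩⟨ii| + ((n−1)/(d−n)) · ψψ† on ℂ^d ⊗ ℂ^d has Schmidt number at most n. -/

import Mathlib

open Matrix BigOperators Kronecker ComplexOrder

/-- The d×d matrix `M_v` associated with a vector `v` on ℂ^d ⊗ ℂ^d, `(M_v)_{ij} = v (i,j)`. -/
def toMat (d : ℕ) (v : Fin d × Fin d → ℂ) : Matrix (Fin d) (Fin d) ℂ :=
  Matrix.of fun i j => v (i, j)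

/-- `ρ` has Schmidt number at most `n`: it is a finite sum of `w wᴴ` with each `w` of
Schmidt rank (i.e. rank of the associated d×d matrix) at most `n`. -/
def SchmidtNumberLE (d : ℕ) (ρ : Matrix (Fin d × Fin d) (Fin d × Fin d) ℂ) (n : ℕ) : Prop :=
  ∃ (k : ℕ) (w : Fin k → (Fin d × Fin d → ℂ)),
    (∀ i, (toMat d (w i)).rank ≤ n) ∧
    ρ = ∑ i, Matrix.vecMulVec (w i) (star (w i))

/-- The vector `Σ_i a_i |ii⟩`. -/
noncomputable def ketDiag (d : ℕ) (a : Fin d → ℝ) : Fin d × Fin d → ℂ :=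
  fun p => if p.1 = p.2 then ((a p.1 : ℝ) : ℂ) else 0

/-!
Restrict `ψ = Σ_i a_i |ii⟩` to each `n`-element set `S` of indices: `ψ_S = Σ_{i ∈ S} a_i |ii⟩` has
Schmidt rank at most `n`. In `Σ_S ψ_S ψ_Sᴴ` the coefficient `a_i conj(a_j)` of `|ii⟩⟨jj|` is counted
once for each `S` containing `i` and `j`, that is `C(d-1, n-1)` times for `i = j` and
`C(d-1, n-1) - C(d-2, n-1)` times otherwise. Since `C(d-1, n-1) / C(d-2, n-1) = (d-1)/(d-n)`, this
sum is `C(d-2, n-1)` times the given matrix.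
-/

section PairCounting

open Finset

variable {α : Type*} [DecidableEq α] {s : Finset α} {i j : α} {n : ℕ}

lemma card_filter_mem_powersetCard (hi : i ∈ s) (hn : 1 ≤ n) :
    #{t ∈ s.powersetCard n | i ∈ t} = (#s - 1).choose (n - 1) := by
  simpa using card_filter_powersetCard_subset {i} s n (by simpa using hi) (by simpa using hn)

lemma card_filter_mem_notMem_powersetCard (hi : i ∈ s) (hj : j ∈ s) (hij : i ≠ j) (hn : 1 ≤ n) :
    #{t ∈ s.powersetCard n | i ∈ t ∧ j ∉ t} = (#s - 2).choose (n - 1) := by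
  have avoid_j : {t ∈ s.powersetCard n | i ∈ t ∧ j ∉ t} =
      {t ∈ (s.erase j).powersetCard n | i ∈ t} := by
    ext t
    simp only [mem_filter, mem_powersetCard, subset_erase]
    tauto
  rw [avoid_j, card_filter_mem_powersetCard (mem_erase.mpr ⟨hij, hi⟩) hn, card_erase_of_mem hj,
    Nat.sub_sub]

lemma choose_sub_one_eq_choose_sub_two_mul {d n : ℕ} (hn : 1 ≤ n) (hnd : n < d) :
    ((d - 1).choose (n - 1) : ℝ) = (d - 2).choose (n - 1) * (1 + ((n : ℝ) - 1) / (d - n)) := by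
  obtain ⟨k, rfl⟩ := Nat.exists_eq_add_of_le' hn
  obtain ⟨e, rfl⟩ := Nat.exists_eq_add_of_lt hnd
  have absorption : ((k + e).choose k * (k + e + 1) : ℝ) = (k + e + 1).choose k * (e + 1) := by
    have h := Nat.choose_mul_succ_eq (k + e) k
    rw [show k + e + 1 - k = e + 1 by lia] at h
    exact_mod_cast h
  rw [show k + 1 + e + 1 - 1 = k + e + 1 by lia, show k + 1 + e + 1 - 2 = k + e by lia,
    Nat.add_sub_cancel]
  have ratio : (1 : ℝ) + ((k + 1 : ℕ) - 1) / ((k + 1 + e + 1 : ℕ) - (k + 1 : ℕ)) =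
      (k + e + 1) / (e + 1) := by
    rw [show ((k + 1 + e + 1 : ℕ) : ℝ) - (k + 1 : ℕ) = e + 1 by push_cast; ring]
    push_cast
    field_simp
    ring
  rw [ratio, ← mul_div_assoc, absorption, mul_div_cancel_right₀ _ (by positivity)]

lemma card_filter_mem_mem_powersetCard (hi : i ∈ s) (hj : j ∈ s) (hn : 1 ≤ n) (hns : n < #s) :
    (#{t ∈ s.powersetCard n | i ∈ t ∧ j ∈ t} : ℝ) =
      (#s - 2).choose (n - 1) * ((if i = j then 1 else 0) + ((n : ℝ) - 1) / (#s - n)) := by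
  by_cases hij : i = j
  · subst hij
    simp only [and_self, if_true]
    rw [card_filter_mem_powersetCard hi hn, choose_sub_one_eq_choose_sub_two_mul hn hns]
  · have split_on_j := card_filter_add_card_filter_not (s := {t ∈ s.powersetCard n | i ∈ t}) (j ∈ ·)
    rw [filter_filter, filter_filter, card_filter_mem_notMem_powersetCard hi hj hij hn,
      card_filter_mem_powersetCard hi hn] at split_on_j
    have cast_split := congrArg (Nat.cast : ℕ → ℝ) split_on_j
    rw [Nat.cast_add, choose_sub_one_eq_choose_sub_two_mul hn hns] at cast_split
    rw [if_neg hij]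
    linear_combination cast_split

lemma sum_powersetCard_indicator_mul_star {R : Type*} [NonUnitalNonAssocSemiring R]
    [StarRing R] [Module ℝ R]
    (hi : i ∈ s) (hj : j ∈ s) (hn : 1 ≤ n) (hns : n < #s) (a : α → R) :
    ∑ t ∈ s.powersetCard n, (t : Set α).indicator a i * star ((t : Set α).indicator a j) =
      ((#s - 2).choose (n - 1) : ℝ) •
        ((if i = j then a i * star (a j) else 0) +
          (((n : ℝ) - 1) / (#s - n)) • (a i * star (a j))) := by
  have summand (t : Finset α) : (t : Set α).indicator a i * star ((t : Set α).indicator a j) =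
      if i ∈ t ∧ j ∈ t then a i * star (a j) else 0 := by
    by_cases hit : i ∈ t <;> by_cases hjt : j ∈ t <;> simp [hit, hjt]
  simp only [summand]
  rw [← sum_filter, sum_const, ← Nat.cast_smul_eq_nsmul ℝ,
    card_filter_mem_mem_powersetCard hi hj hn hns, mul_smul, add_smul, ite_smul, one_smul,
    zero_smul]

end PairCounting

lemma rank_smul_le {R m n : Type*} [CommRing R] [Nontrivial R] [Fintype n] (c : R)
    (A : Matrix m n R) : (c • A).rank ≤ A.rank := by
  classical
  rw [smul_eq_mul_diagonal]
  exact rank_mul_le_left _ _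

namespace SchmidtNumberLE

variable {d n : ℕ}

lemma sum_vecMulVec {ι : Type*} (s : Finset ι) {w : ι → Fin d × Fin d → ℂ}
    (hw : ∀ i ∈ s, (toMat d (w i)).rank ≤ n) :
    SchmidtNumberLE d (∑ i ∈ s, vecMulVec (w i) (star (w i))) n := by
  refine ⟨s.card, fun k => w (s.equivFin.symm k), fun k => hw _ (s.equivFin.symm k).2, ?_⟩
  rw [s.equivFin.symm.sum_comp fun i : s => vecMulVec (w i) (star (w i)),
    s.sum_coe_sort fun i => vecMulVec (w i) (star (w i))]

lemma smul {ρ : Matrix (Fin d × Fin d) (Fin d × Fin d) ℂ} (hρ : SchmidtNumberLE d ρ n)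
    {r : ℝ} (hr : 0 ≤ r) : SchmidtNumberLE d (r • ρ) n := by
  obtain ⟨k, w, hw, rfl⟩ := hρ
  refine ⟨k, fun i => √r • w i, fun i => ?_, ?_⟩
  · exact (rank_smul_le (√r : ℂ) (toMat d (w i))).trans (hw i)
  · simp only [Finset.smul_sum, star_smul, star_trivial, smul_vecMulVec, vecMulVec_smul, smul_smul,
      Real.mul_self_sqrt hr]

end SchmidtNumberLE

/-- The vector `Σ_i a_i |ii⟩` with complex coefficients; `ketDiag` is the case of real ones. -/
def complexKetDiag (d : ℕ) (a : Fin d → ℂ) : Fin d × Fin d → ℂ :=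
  fun p => if p.1 = p.2 then a p.1 else 0

lemma toMat_complexKetDiag (d : ℕ) (a : Fin d → ℂ) :
    toMat d (complexKetDiag d a) = diagonal a := by
  ext i j
  simp only [toMat, complexKetDiag, of_apply, diagonal_apply]

lemma rank_toMat_complexKetDiag_indicator_le (d : ℕ) (a : Fin d → ℂ) (s : Finset (Fin d)) :
    (toMat d (complexKetDiag d ((s : Set (Fin d)).indicator a))).rank ≤ s.card := by
  classical
  rw [toMat_complexKetDiag, rank_diagonal, Fintype.card_subtype]
  refine Finset.card_le_card fun i hi => ?_
  exact Set.mem_of_indicator_ne_zero (Finset.mem_filter.mp hi).2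

lemma sum_vecMulVec_complexKetDiag_indicator {d n : ℕ} (hn : 1 ≤ n) (hnd : n < d)
    (a : Fin d → ℂ) :
    ∑ s ∈ Finset.powersetCard n (Finset.univ : Finset (Fin d)),
        vecMulVec (complexKetDiag d ((s : Set (Fin d)).indicator a))
          (star (complexKetDiag d ((s : Set (Fin d)).indicator a))) =
      ((d - 2).choose (n - 1) : ℝ) •
        (diagonal (fun p : Fin d × Fin d =>
            if p.1 = p.2 then ((‖a p.1‖ ^ 2 : ℝ) : ℂ) else 0) +
          (((n : ℝ) - 1) / ((d : ℝ) - (n : ℝ))) •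
            vecMulVec (complexKetDiag d a) (star (complexKetDiag d a))) := by
  ext ⟨i, i'⟩ ⟨j, j'⟩
  by_cases hi : i = i'
  · by_cases hj : j = j'
    · subst hi hj
      have coeff := sum_powersetCard_indicator_mul_star (Finset.mem_univ i) (Finset.mem_univ j) hn
        (by simpa only [Finset.card_univ, Fintype.card_fin] using hnd) a
      simp only [Finset.card_univ, Fintype.card_fin] at coeff
      have diag : (if (i, i) = (j, j) then ((‖a i‖ ^ 2 : ℝ) : ℂ) else 0) =
          if i = j then a i * star (a j) else 0 := by
        by_cases hij : i = j
        · subst hij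
          simp [Complex.mul_conj']
        · simp [hij]
      simp only [Matrix.sum_apply, vecMulVec_apply, Matrix.add_apply, Matrix.smul_apply,
        diagonal_apply, Pi.star_apply, complexKetDiag, if_true, diag, coeff]
    · have hp : (i, i') ≠ (j, j') := by grind
      simp [Matrix.sum_apply, vecMulVec_apply, complexKetDiag, hj, hp]
  · simp [Matrix.sum_apply, vecMulVec_apply, diagonal_apply, complexKetDiag, hi]

theorem filtered_K_schmidt_number_general (d n : ℕ) (hn : 1 ≤ n) (hnd : n < d) (a : Fin d → ℂ) :
    SchmidtNumberLE d
      (diagonal (fun p : Fin d × Fin d =>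
          if p.1 = p.2 then ((‖a p.1‖ ^ 2 : ℝ) : ℂ) else 0) +
        (((n : ℝ) - 1) / ((d : ℝ) - (n : ℝ))) •
          vecMulVec (complexKetDiag d a) (star (complexKetDiag d a))) n := by
  have count_ne_zero : ((d - 2).choose (n - 1) : ℝ) ≠ 0 :=
    Nat.cast_ne_zero.mpr (Nat.choose_pos (by lia)).ne'
  rw [← inv_smul_smul₀ count_ne_zero (_ + _), ← sum_vecMulVec_complexKetDiag_indicator hn hnd]
  refine (SchmidtNumberLE.sum_vecMulVec _ fun s hs => ?_).smul (by positivity)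
  exact (rank_toMat_complexKetDiag_indicator_le d a s).trans (Finset.mem_powersetCard.mp hs).2.le

/-- `Σ_i a_i² |ii⟩⟨ii| + ((n-1)/(d-n)) ψψᴴ` has Schmidt number at most `n`. -/
theorem filtered_K_schmidt_number (d n : ℕ) (hd : 2 ≤ d) (hn : 1 ≤ n) (hnd : n < d)
    (a : Fin d → ℝ) (ha : ∀ i, 0 ≤ a i) :
    SchmidtNumberLE d
      (Matrix.diagonal (fun p : Fin d × Fin d =>
          if p.1 = p.2 then ((a p.1 ^ 2 : ℝ) : ℂ) else 0) +
        (((n : ℝ) - 1) / ((d : ℝ) - (n : ℝ))) •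
          Matrix.vecMulVec (ketDiag d a) (star (ketDiag d a))) n := by
  simpa only [Complex.norm_real, Real.norm_eq_abs, sq_abs] using!
    filtered_K_schmidt_number_general d n hn hnd fun i => (a i : ℂ)
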